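/- For every integer n ≥ 3 and all real x with 0 < x < π/2, ((−1)^n·2^{2n+1}/(2n+2)! + 2^{2n+2}(2^{2n+2}−1)|B_{2n+2}|/(2n+2)!)·x^{2n−1}·tan x < (sin x/x)^2 + (tan x)/x − [2 + Σ_{k=3}^{n} ((−1)^{k−1}·2^{2k−1}/(2k)! + 2^{2k}(2^{2k}−1)|B_{2k}|/(2k)!)·x^{2k−2}] < (2/π)^{2n}·x^{2n−1}·tan x. -/

import Mathlib

/-! Write `t_k` for the coefficient of `x^(2k-1)` in `tan x` (`tanCoeff`), `s_k` for the coefficient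
of `x^(2k)` in `sin² x` (`sinSqCoeff`), and `a_k = s_k + t_k`. Since `a_1 = 2` and `a_2 = 0`, the
middle expression is the tail `∑_{k > n} a_k x^(2k-2)` of a power series (`hasSum_tail`), while both
bounds are constants times `x^(2n) * (tan x / x) = ∑_j t_{j+1} x^(2n+2j)`. Both inequalities hold
coefficient by coefficient:
`a_{n+1} t_{j+1} ≤ a_{n+1+j} ≤ (2/π)^(2n) t_{j+1}`.

To see this, use `t_k = 2 (4/π²)^k λ_k` with `λ_k = ∑_m (2m+1)^(-2k)` (`oddZeta`), which follows from
`ζ(2k)` in terms of Bernoulli numbers, and write `s_k = 2 (4/π²)^k ε_k` (`sinSqErr`), where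
`|ε_k| = π^(2k) / (4 (2k)!) ≤ 407 / 9^k` for `k ≥ 4`. The comparisons become
* upper (`upper_coeff`): `λ_k + ε_k < λ_{j+1}` with `k = n + 1 + j`, true because the term `m = 1`
  alone gives `λ_{j+1} - λ_k ≥ 9^(-j-1) - 9^(-k) ≥ (9^3 - 1) 9^(-k) > |ε_k|`;
* lower (`lower_coeff`): `(λ_k + ε_k) (8/π²) λ_{j+1} < λ_{k+j} + ε_{k+j}` with `k = n + 1`, `j ≥ 1`,
  true because `(8/π²) λ_{j+1} ≤ (8/π²) λ_2 = π²/12 < 5/6`; for `j = 0` equality holds.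

The series of `tan` itself comes from the Mittag-Leffler expansion of the cotangent, expanded into
geometric series, and `tan x = cot x - 2 cot (2x)`. -/

open Real

/-! ### Coefficients -/

/-- Odd zeta sum `λ(2k) = ∑ 1 / (2m + 1)^(2k)`. -/
noncomputable def oddZeta (k : ℕ) : ℝ := ∑' m : ℕ, 1 / (2 * (m : ℝ) + 1) ^ (2 * k)

/-- The `k`-th Taylor coefficient `2^(2k) (2^(2k) - 1) |B_{2k}| / (2k)!` of `tan`
(the one in front of `x^(2k-1)`). -/
noncomputable def tanCoeff (k : ℕ) : ℝ :=
  2 ^ (2 * k) * (2 ^ (2 * k) - 1) * |(bernoulli (2 * k) : ℝ)| / (Nat.factorial (2 * k))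

/-- The coefficient `(-1)^(k-1) 2^(2k-1) / (2k)!` of `x^(2k)` in the Taylor series of `sin² x`,
for `k ≥ 1` (the subtractions in the exponents are truncated at `k = 0`). -/
noncomputable def sinSqCoeff (k : ℕ) : ℝ :=
  (-1 : ℝ) ^ (k - 1) * 2 ^ (2 * k - 1) / (Nat.factorial (2 * k))

/-- The coefficient of `sin²`, normalized by `2 (4/π²)^k`, for `k ≥ 1`. -/
noncomputable def sinSqErr (k : ℕ) : ℝ :=
  (-1 : ℝ) ^ (k - 1) * ((π ^ 2) ^ k / (4 * (Nat.factorial (2 * k))))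

/-! ### Taylor series of the tangent -/

/-- Interchange of summation for a double series of nonnegative reals. -/
lemma hasSum_swap {f : ℕ → ℕ → ℝ} {r c : ℕ → ℝ} {R : ℝ} (h0 : ∀ n k, 0 ≤ f n k)
    (hr : ∀ n, HasSum (fun k => f n k) (r n)) (hR : HasSum r R)
    (hc : ∀ k, HasSum (fun n => f n k) (c k)) : HasSum c R := by
  have hs : Summable (fun p : ℕ × ℕ => f p.1 p.2) := by
    rw [summable_prod_of_nonneg (fun p => h0 p.1 p.2)]
    refine ⟨fun n => (hr n).summable, ?_⟩
    simpa only [fun n => (hr n).tsum_eq] using hR.summable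
  have h1 : HasSum r (∑' p : ℕ × ℕ, f p.1 p.2) := hs.hasSum.prod_fiberwise hr
  have h2 : HasSum c (∑' p : ℕ × ℕ, f p.1 p.2) :=
    ((Equiv.prodComm ℕ ℕ).hasSum_iff.mpr hs.hasSum).prod_fiberwise hc
  rwa [h1.unique hR] at h2

/-- Real form of the Mittag-Leffler expansion of the cotangent. -/
lemma hasSum_cot {z : ℝ} (h0 : 0 < z) (h1 : z < 1) :
    HasSum (fun n : ℕ => 2 * z ^ 2 / (((n : ℝ) + 1) ^ 2 - z ^ 2))
      (1 - π * z * (cos (π * z) / sin (π * z))) := by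
  have hz : (z : ℂ) ∈ Complex.integerComplement := by
    rintro ⟨m, hm⟩
    have hm' : (m : ℝ) = z := by exact_mod_cast hm
    rw [← hm'] at h0 h1
    have a : 0 < m := by exact_mod_cast h0
    have b : m < 1 := by exact_mod_cast h1
    omega
  have h := (summable_cotTerm hz).hasSum
  have e : ∑' n, cotTerm (z : ℂ) n = π * Complex.cot (π * z) - 1 / z := (cot_series_rep' hz).symm
  rw [e] at h
  have h' := h.mul_left (-(z : ℂ))
  rw [← Complex.hasSum_ofReal]
  have hzc : (z : ℂ) ≠ 0 := by exact_mod_cast h0.ne'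
  convert! h' using 1
  · funext n
    have p : (n : ℝ) + 1 - z ≠ 0 := by have := n.cast_nonneg (α := ℝ); linarith
    have q : (n : ℝ) + 1 + z ≠ 0 := by have := n.cast_nonneg (α := ℝ); linarith
    have key : 2 * z ^ 2 / (((n : ℝ) + 1) ^ 2 - z ^ 2)
        = -z * (1 / (z - (n + 1)) + 1 / (z + (n + 1))) := by
      have p' : z - (n + 1) ≠ 0 := by contrapose! p; linarith
      have q' : z + (n + 1) ≠ 0 := by contrapose! q; linarith
      have r : ((n : ℝ) + 1) ^ 2 - z ^ 2 ≠ 0 := by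
        rw [sq_sub_sq]; exact mul_ne_zero (by rwa [add_comm] at q') p |> fun h => by
          simpa [add_comm, add_left_comm] using h
      field_simp
      ring
    rw [key]; simp [cotTerm]
  · simp only [Complex.cot]
    push_cast
    field_simp
    ring

lemma hasSum_zeta_shift {k : ℕ} (hk : k ≠ 0) :
    HasSum (fun n : ℕ => 1 / ((n : ℝ) + 1) ^ (2 * k)) (∑' n : ℕ, 1 / (n : ℝ) ^ (2 * k)) := by
  have h := (hasSum_nat_add_iff' 1).mpr (hasSum_zeta_nat hk).summable.hasSum
  have h2 : 2 * k ≠ 0 := by omega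
  simpa [h2] using h

/-- Power series of `z ↦ 1 - π z cot (π z)`, whose coefficients are even zeta values. -/
lemma hasSum_cot_zeta {z : ℝ} (h0 : 0 < z) (h1 : z < 1) :
    HasSum (fun k : ℕ => 2 * (∑' n : ℕ, 1 / (n : ℝ) ^ (2 * (k + 1))) * z ^ (2 * (k + 1)))
      (1 - π * z * (cos (π * z) / sin (π * z))) := by
  refine hasSum_swap (f := fun n k => 2 * (z ^ 2 / ((n : ℝ) + 1) ^ 2) ^ (k + 1))
    (fun n k => by positivity) (fun n => ?_) (hasSum_cot h0 h1) (fun k => ?_)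
  · have hlt : z ^ 2 < ((n : ℝ) + 1) ^ 2 := by
      have := n.cast_nonneg (α := ℝ)
      gcongr; linarith
    have hp : 0 < ((n : ℝ) + 1) ^ 2 := by positivity
    have hg := (hasSum_geometric_of_lt_one (r := z ^ 2 / ((n : ℝ) + 1) ^ 2) (by positivity)
      ((div_lt_one hp).mpr hlt)).mul_left (2 * (z ^ 2 / ((n : ℝ) + 1) ^ 2))
    convert! hg using 1
    · funext k; ring
    · have : ((n : ℝ) + 1) ^ 2 - z ^ 2 ≠ 0 := by linarith
      field_simp
  · convert! (hasSum_zeta_shift (Nat.succ_ne_zero k)).mul_left (2 * z ^ (2 * (k + 1))) using 1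
    · funext n; rw [div_pow, ← pow_mul, ← pow_mul, Nat.succ_eq_add_one]; ring
    · ring

lemma tanCoeff_eq_zeta {k : ℕ} (hk : k ≠ 0) :
    tanCoeff k = 2 * (2 ^ (2 * k) - 1) * (∑' n : ℕ, 1 / (n : ℝ) ^ (2 * k)) / π ^ (2 * k) := by
  have h := hasSum_zeta_nat hk
  have hpos : 0 ≤ ∑' n : ℕ, 1 / (n : ℝ) ^ (2 * k) := tsum_nonneg fun n => by positivity
  -- positivity of the zeta value fixes the sign of the Bernoulli number
  have habs : ∑' n : ℕ, 1 / (n : ℝ) ^ (2 * k) =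
      2 ^ (2 * k - 1) * π ^ (2 * k) * |(bernoulli (2 * k) : ℝ)| / (Nat.factorial (2 * k)) := by
    rw [← abs_of_nonneg hpos, h.tsum_eq]
    simp [abs_mul, abs_div, abs_of_pos pi_pos]
  rw [habs, tanCoeff]
  have e : (2 : ℝ) ^ (2 * k) = 2 * 2 ^ (2 * k - 1) := by
    rw [← pow_succ']; congr 1; omega
  have := pi_pos
  rw [e]
  field_simp

/-- The Taylor series of `tan x / x` on `(0, π/2)`, from `tan x = cot x - 2 cot (2x)`. -/
lemma hasSum_tan {x : ℝ} (h1 : 0 < x) (h2 : x < π / 2) :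
    HasSum (fun k : ℕ => tanCoeff (k + 1) * x ^ (2 * k)) (tan x / x) := by
  have hp := pi_pos
  have hc : cos x ≠ 0 := (cos_pos_of_mem_Ioo ⟨by linarith, h2⟩).ne'
  have hs : sin x ≠ 0 := (sin_pos_of_pos_of_lt_pi h1 (by linarith)).ne'
  have A := hasSum_cot_zeta (z := x / π) (by positivity) (by rw [div_lt_one hp]; linarith)
  have B := hasSum_cot_zeta (z := 2 * x / π) (by positivity) (by rw [div_lt_one hp]; linarith)
  have C := (B.sub A).mul_left (1 / x ^ 2)
  rw [mul_div_cancel₀ _ hp.ne', mul_div_cancel₀ _ hp.ne'] at C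
  convert! C using 1
  · funext k
    rw [tanCoeff_eq_zeta k.succ_ne_zero, div_pow, div_pow, mul_pow]
    have e : x ^ (2 * (k + 1)) = x ^ 2 * x ^ (2 * k) := by ring
    rw [e]
    field_simp
  · rw [sin_two_mul, cos_two_mul, tan_eq_sin_div_cos]
    field_simp
    have := sin_sq_add_cos_sq x
    linear_combination x * this

/-! ### Coefficients in terms of odd zeta sums -/

lemma summable_oddZeta {k : ℕ} (hk : k ≠ 0) :
    Summable (fun m : ℕ => 1 / (2 * (m : ℝ) + 1) ^ (2 * k)) := by
  have h := (hasSum_zeta_nat hk).summable.comp_injective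
    (i := fun m : ℕ => 2 * m + 1) (fun a b h => by simpa using h)
  simpa [Function.comp_def] using h

/-- Splitting the zeta sum into even and odd terms. -/
lemma oddZeta_eq {k : ℕ} (hk : k ≠ 0) :
    oddZeta k * 2 ^ (2 * k) = (2 ^ (2 * k) - 1) * ∑' n : ℕ, 1 / (n : ℝ) ^ (2 * k) := by
  have hz := (hasSum_zeta_nat hk).summable.hasSum
  have he : HasSum (fun m : ℕ => 1 / (((2 * m : ℕ) : ℝ)) ^ (2 * k))
      (1 / 2 ^ (2 * k) * ∑' n : ℕ, 1 / (n : ℝ) ^ (2 * k)) := by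
    convert! hz.mul_left (1 / 2 ^ (2 * k)) using 1
    funext m
    push_cast
    rw [mul_pow]; ring
  have ho : HasSum (fun m : ℕ => 1 / (((2 * m + 1 : ℕ) : ℝ)) ^ (2 * k)) (oddZeta k) := by
    convert! (summable_oddZeta hk).hasSum using 1
    funext m; push_cast; rfl
  have h := (HasSum.even_add_odd (f := fun n : ℕ => 1 / (n : ℝ) ^ (2 * k)) he ho).unique hz
  have hc : (1 : ℝ) / 2 ^ (2 * k) * 2 ^ (2 * k) = 1 := by field_simp
  generalize ((1 : ℝ) / 2 ^ (2 * k)) = u at h hc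
  generalize ((2 : ℝ) ^ (2 * k)) = v at hc ⊢
  linear_combination v * h - (∑' n : ℕ, 1 / (n : ℝ) ^ (2 * k)) * hc

lemma tanCoeff_eq {k : ℕ} (hk : k ≠ 0) : tanCoeff k = 2 * (4 / π ^ 2) ^ k * oddZeta k := by
  have h := oddZeta_eq hk
  have hp := pi_pos
  rw [tanCoeff_eq_zeta hk, div_pow, ← pow_mul, mul_assoc, ← h, pow_mul 2 2 k]
  norm_num
  field_simp

lemma sinSqCoeff_eq {k : ℕ} (hk : k ≠ 0) : sinSqCoeff k = 2 * (4 / π ^ 2) ^ k * sinSqErr k := by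
  have hp := pi_pos
  have e : (4 : ℝ) ^ k = 2 * 2 ^ (2 * k - 1) := by
    rw [← pow_succ', show 2 * k - 1 + 1 = 2 * k by omega, pow_mul]; norm_num
  rw [sinSqCoeff, sinSqErr, div_pow, e]
  field_simp
  norm_num

lemma oddZeta_one : oddZeta 1 = π ^ 2 / 8 := by
  have h := oddZeta_eq one_ne_zero
  rw [show ∑' n : ℕ, 1 / (n : ℝ) ^ (2 * 1) = π ^ 2 / 6 from hasSum_zeta_two.tsum_eq] at h
  linarith

lemma oddZeta_two : oddZeta 2 = π ^ 4 / 96 := by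
  have h := oddZeta_eq two_ne_zero
  rw [show ∑' n : ℕ, 1 / (n : ℝ) ^ (2 * 2) = π ^ 4 / 90 from hasSum_zeta_four.tsum_eq] at h
  norm_num at h
  linarith

/-! ### Estimates for the coefficients -/

lemma one_le_oddZeta {k : ℕ} (hk : k ≠ 0) : 1 ≤ oddZeta k := by
  simpa [oddZeta] using (summable_oddZeta hk).le_tsum 0 (fun m _ => by positivity)

/-- The decay of `oddZeta`, quantified by the term `m = 1`. -/
lemma oddZeta_gap {j k : ℕ} (hj : j ≠ 0) (hjk : j ≤ k) :
    1 / 9 ^ j - 1 / 9 ^ k ≤ oddZeta j - oddZeta k := by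
  have hk : k ≠ 0 := by omega
  have hs := (summable_oddZeta hj).sub (summable_oddZeta hk)
  rw [oddZeta, oddZeta, ← (summable_oddZeta hj).tsum_sub (summable_oddZeta hk)]
  refine le_trans (le_of_eq ?_) (hs.le_tsum 1 (fun m _ => ?_))
  · rw [pow_mul, pow_mul]; norm_num
  · rw [sub_nonneg]
    have : (1 : ℝ) ≤ 2 * m + 1 := by have := m.cast_nonneg (α := ℝ); linarith
    gcongr

lemma oddZeta_anti {j k : ℕ} (hj : j ≠ 0) (hjk : j ≤ k) : oddZeta k ≤ oddZeta j := by
  have h := oddZeta_gap hj hjk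
  have : (1 : ℝ) / 9 ^ k ≤ 1 / 9 ^ j := by gcongr; norm_num
  linarith

lemma pi_sq_lt_ten : π ^ 2 < 10 := by
  have := pi_lt_d2
  have := pi_pos
  nlinarith

/-- The base case `k = 4` is the largest ratio, as `(2k + 2)(2k + 1) ≥ 90` from there on. The
base `90` is `9` times the upper bound `10` for `π²`. -/
lemma ninety_pow_le {k : ℕ} (hk : 4 ≤ k) : (90 : ℝ) ^ k ≤ 1628 * (Nat.factorial (2 * k)) := by
  induction k, hk using Nat.le_induction with
  | base => norm_num [Nat.factorial]
  | succ k hk ih =>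
    have e : (Nat.factorial (2 * (k + 1)) : ℝ)
        = (2 * k + 2) * (2 * k + 1) * Nat.factorial (2 * k) := by
      rw [show 2 * (k + 1) = 2 * k + 1 + 1 by ring, Nat.factorial_succ, Nat.factorial_succ]
      push_cast; ring
    have hk' : (4 : ℝ) ≤ k := by exact_mod_cast hk
    have h90 : (90 : ℝ) ≤ (2 * k + 2) * (2 * k + 1) := by nlinarith
    rw [e, pow_succ]
    calc (90 : ℝ) ^ k * 90 ≤ (1628 * (Nat.factorial (2 * k))) * ((2 * k + 2) * (2 * k + 1)) := by
          gcongr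
      _ = _ := by ring

lemma abs_sinSqErr_le {k : ℕ} (hk : 4 ≤ k) : |sinSqErr k| ≤ 407 / 9 ^ k := by
  have hf : (0 : ℝ) < Nat.factorial (2 * k) := by positivity
  have h1 : |sinSqErr k| = (π ^ 2) ^ k / (4 * (Nat.factorial (2 * k))) := by
    rw [sinSqErr, abs_mul, abs_pow, abs_neg, abs_one, one_pow, one_mul,
      abs_of_nonneg (by positivity)]
  have h2 : (π ^ 2) ^ k ≤ 10 ^ k := by gcongr; exact pi_sq_lt_ten.le
  have h3 := ninety_pow_le hk
  rw [h1, div_le_div_iff₀ (by positivity) (by positivity)]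
  calc (π ^ 2) ^ k * 9 ^ k ≤ 10 ^ k * 9 ^ k := by gcongr
    _ = 90 ^ k := by rw [← mul_pow]; norm_num
    _ ≤ _ := by linarith

/-- Normalized coefficient comparison behind the upper bound. -/
lemma upper_coeff {n : ℕ} (hn : 3 ≤ n) (j : ℕ) :
    oddZeta (n + 1 + j) + sinSqErr (n + 1 + j) < oddZeta (j + 1) := by
  have h1 := oddZeta_gap (Nat.succ_ne_zero j) (show j + 1 ≤ n + 1 + j by omega)
  have h2 := (le_abs_self _).trans (abs_sinSqErr_le (show 4 ≤ n + 1 + j by omega))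
  have h3 : (1 : ℝ) / 9 ^ (j + 1) = 9 ^ n / 9 ^ (n + 1 + j) := by
    rw [div_eq_div_iff (by positivity) (by positivity)]; ring
  have h4 : (9 : ℝ) ^ 3 ≤ 9 ^ n := by gcongr; norm_num
  have h5 : (407 : ℝ) / 9 ^ (n + 1 + j) < 9 ^ n / 9 ^ (n + 1 + j) - 1 / 9 ^ (n + 1 + j) := by
    rw [← sub_div]; gcongr; linarith
  simp only [Nat.succ_eq_add_one] at h1
  linarith

/-- Normalized coefficient comparison behind the lower bound; for `j = 0` the two sides agree. -/
lemma lower_coeff {k : ℕ} (hk : 4 ≤ k) {j : ℕ} (hj : j ≠ 0) :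
    (oddZeta k + sinSqErr k) * (2 * (4 / π ^ 2) * oddZeta (j + 1))
      < oddZeta (k + j) + sinSqErr (k + j) := by
  have hp := pi_pos
  have hpi := pi_sq_lt_ten
  have a1 := oddZeta_anti two_ne_zero (show 2 ≤ k by omega)
  have a2 := oddZeta_anti two_ne_zero (show 2 ≤ j + 1 by omega)
  have a3 := one_le_oddZeta (show k ≠ 0 by omega)
  have a4 := one_le_oddZeta (show k + j ≠ 0 by omega)
  rw [oddZeta_two] at a1 a2
  have b1 := abs_le.mp (abs_sinSqErr_le hk)
  have b2 := abs_le.mp (abs_sinSqErr_le (show 4 ≤ k + j by omega))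
  have c1 : (407 : ℝ) / 9 ^ k ≤ 407 / 9 ^ 4 := by gcongr; norm_num
  have c2 : (407 : ℝ) / 9 ^ (k + j) ≤ 407 / 9 ^ 5 := by
    gcongr
    · norm_num
    · omega
  have d1 : 2 * (4 / π ^ 2) * oddZeta (j + 1) ≤ 5 / 6 := by
    calc 2 * (4 / π ^ 2) * oddZeta (j + 1) ≤ 2 * (4 / π ^ 2) * (π ^ 4 / 96) := by gcongr
      _ = π ^ 2 / 12 := by field_simp; norm_num
      _ ≤ 5 / 6 := by linarith
  have d2 : π ^ 4 / 96 ≤ 100 / 96 := by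
    have : π ^ 4 = (π ^ 2) ^ 2 := by ring
    nlinarith [sq_nonneg π]
  norm_num at c1 c2
  calc (oddZeta k + sinSqErr k) * (2 * (4 / π ^ 2) * oddZeta (j + 1))
      ≤ (oddZeta k + sinSqErr k) * (5 / 6) := by
        gcongr; linarith [b1.1]
    _ < oddZeta (k + j) + sinSqErr (k + j) := by linarith [b1.2, b2.1]

/-! ### The remainder as a power series -/

/-- The Taylor series of `(sin x / x)²`, from `2 sin² x = 1 - cos (2x)`. -/
lemma hasSum_sin_sq {x : ℝ} (hx : x ≠ 0) :
    HasSum (fun k : ℕ => sinSqCoeff (k + 1) * x ^ (2 * k)) ((sin x / x) ^ 2) := by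
  have h := ((hasSum_nat_add_iff' 1).mpr (hasSum_cos (2 * x))).mul_left (-(1 / (2 * x ^ 2)))
  convert! h using 1
  · funext k
    rw [sinSqCoeff, show k + 1 - 1 = k by omega, show 2 * (k + 1) - 1 = 2 * k + 1 by omega,
      mul_pow, show x ^ (2 * (k + 1)) = x ^ 2 * x ^ (2 * k) by ring,
      show (2 : ℝ) ^ (2 * (k + 1)) = 2 * 2 ^ (2 * k + 1) by ring, pow_succ (-1 : ℝ) k]
    field_simp
  · rw [cos_two_mul]
    simp
    field_simp
    have := sin_sq_add_cos_sq x
    linear_combination 2 * this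

/-- The remainder of the Taylor series of `(sin x / x)² + tan x / x` after the first `n` terms;
the terms `k = 1` and `k = 2` contribute `2` and `0`. -/
lemma hasSum_tail {n : ℕ} (hn : 3 ≤ n) {x : ℝ} (h1 : 0 < x) (h2 : x < π / 2) :
    HasSum (fun j : ℕ => (sinSqCoeff (n + 1 + j) + tanCoeff (n + 1 + j)) * x ^ (2 * (j + n)))
      ((sin x / x) ^ 2 + tan x / x -
        (2 + ∑ k ∈ Finset.Icc 3 n, (sinSqCoeff k + tanCoeff k) * x ^ (2 * k - 2))) := by
  have hp := pi_pos
  have h := (hasSum_nat_add_iff' n).mpr ((hasSum_sin_sq h1.ne').add (hasSum_tan h1 h2))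
  convert! h using 1
  · funext j
    rw [show n + 1 + j = j + n + 1 by ring]; ring
  · congr 1
    have hI : Finset.Icc 3 n = Finset.Ico (2 + 1) (n + 1) := by ext; simp
    rw [hI, ← Finset.sum_Ico_add' _ 2 n 1, ← Finset.sum_range_add_sum_Ico _ (show 2 ≤ n by omega)]
    congr 1
    · have t1 := tanCoeff_eq one_ne_zero
      have t2 := tanCoeff_eq two_ne_zero
      rw [oddZeta_one] at t1
      rw [oddZeta_two] at t2
      have t1' : tanCoeff 1 = 1 := by rw [t1]; field_simp; norm_num
      have t2' : tanCoeff 2 = 1 / 3 := by rw [t2]; field_simp; norm_num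
      have s1 : sinSqCoeff 1 = 1 := by norm_num [sinSqCoeff, Nat.factorial]
      have s2 : sinSqCoeff 2 = -(1 / 3) := by norm_num [sinSqCoeff, Nat.factorial]
      norm_num [Finset.sum_range_succ, t1', t2', s1, s2]
    · refine Finset.sum_congr rfl fun k _ => ?_
      rw [show 2 * (k + 1) - 2 = 2 * k by omega]; ring

/-! ### The two inequalities -/

theorem stmt_13 (n : ℕ) (hn : 3 ≤ n) (x : ℝ) (h1 : 0 < x) (h2 : x < π / 2) :
    ((-1 : ℝ) ^ n * 2 ^ (2 * n + 1) / (Nat.factorial (2 * n + 2)) +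
        2 ^ (2 * n + 2) * (2 ^ (2 * n + 2) - 1) * |(bernoulli (2 * n + 2) : ℝ)| /
          (Nat.factorial (2 * n + 2))) * x ^ (2 * n - 1) * tan x <
      (sin x / x) ^ 2 + tan x / x -
        (2 + ∑ k ∈ Finset.Icc 3 n,
          ((-1 : ℝ) ^ (k - 1) * 2 ^ (2 * k - 1) / (Nat.factorial (2 * k)) +
            2 ^ (2 * k) * (2 ^ (2 * k) - 1) * |(bernoulli (2 * k) : ℝ)| /
              (Nat.factorial (2 * k))) * x ^ (2 * k - 2)) ∧
    (sin x / x) ^ 2 + tan x / x -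
        (2 + ∑ k ∈ Finset.Icc 3 n,
          ((-1 : ℝ) ^ (k - 1) * 2 ^ (2 * k - 1) / (Nat.factorial (2 * k)) +
            2 ^ (2 * k) * (2 ^ (2 * k) - 1) * |(bernoulli (2 * k) : ℝ)| /
              (Nat.factorial (2 * k))) * x ^ (2 * k - 2)) <
      (2 / π) ^ (2 * n) * x ^ (2 * n - 1) * tan x := by
  have hp := pi_pos
  have hS := hasSum_tail hn h1 h2
  have hT := hasSum_tan h1 h2
  have hx : x ^ (2 * n - 1) = x ^ (2 * n) / x := by
    rw [eq_div_iff h1.ne', ← pow_succ]; congr 1; omega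
  -- the coefficients of both series in terms of the odd zeta sums
  have hcoef (j : ℕ) : sinSqCoeff (n + 1 + j) + tanCoeff (n + 1 + j) =
      2 * (4 / π ^ 2) ^ (n + 1 + j) * (oddZeta (n + 1 + j) + sinSqErr (n + 1 + j)) := by
    rw [sinSqCoeff_eq (by omega), tanCoeff_eq (by omega)]; ring
  constructor
  · change (sinSqCoeff (n + 1) + tanCoeff (n + 1)) * x ^ (2 * n - 1) * tan x < _
    have hL := hT.mul_left ((sinSqCoeff (n + 1) + tanCoeff (n + 1)) * x ^ (2 * n))
    have key (j : ℕ) (hj : j ≠ 0) :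
        (sinSqCoeff (n + 1) + tanCoeff (n + 1)) * x ^ (2 * n) * (tanCoeff (j + 1) * x ^ (2 * j)) <
        (sinSqCoeff (n + 1 + j) + tanCoeff (n + 1 + j)) * x ^ (2 * (j + n)) := by
      have hc0 := hcoef 0
      simp only [add_zero] at hc0
      rw [hcoef, hc0, tanCoeff_eq (Nat.succ_ne_zero j)]
      have := lower_coeff (show 4 ≤ n + 1 by omega) hj
      calc _ = 2 * (4 / π ^ 2) ^ (n + 1 + j) * x ^ (2 * (j + n)) *
            ((oddZeta (n + 1) + sinSqErr (n + 1)) * (2 * (4 / π ^ 2) * oddZeta (j + 1))) := by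
            simp only [Nat.succ_eq_add_one]; ring
        _ < 2 * (4 / π ^ 2) ^ (n + 1 + j) * x ^ (2 * (j + n)) *
            (oddZeta (n + 1 + j) + sinSqErr (n + 1 + j)) := by gcongr
        _ = _ := by ring
    have hlt := hasSum_lt (i := 1) (fun j => ?_) (key 1 one_ne_zero) hL hS
    · calc _ = (sinSqCoeff (n + 1) + tanCoeff (n + 1)) * x ^ (2 * n) * (tan x / x) := by
            rw [hx]; ring
        _ < _ := hlt
    · rcases eq_or_ne j 0 with rfl | hj
      · have t1' : tanCoeff 1 = 1 := by
          rw [tanCoeff_eq one_ne_zero, oddZeta_one]; field_simp; norm_num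
        simp [t1']
      · exact (key j hj).le
  · have hU := hT.mul_left ((2 / π) ^ (2 * n) * x ^ (2 * n))
    have key (j : ℕ) :
        (sinSqCoeff (n + 1 + j) + tanCoeff (n + 1 + j)) * x ^ (2 * (j + n)) <
        (2 / π) ^ (2 * n) * x ^ (2 * n) * (tanCoeff (j + 1) * x ^ (2 * j)) := by
      rw [hcoef, tanCoeff_eq (Nat.succ_ne_zero j)]
      have := upper_coeff hn j
      have e : (2 / π) ^ (2 * n) = (4 / π ^ 2) ^ n := by
        rw [pow_mul, div_pow]; norm_num
      calc _ = 2 * (4 / π ^ 2) ^ (n + 1 + j) * x ^ (2 * (j + n)) *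
            (oddZeta (n + 1 + j) + sinSqErr (n + 1 + j)) := by ring
        _ < 2 * (4 / π ^ 2) ^ (n + 1 + j) * x ^ (2 * (j + n)) * oddZeta (j + 1) := by gcongr
        _ = _ := by rw [e]; simp only [Nat.succ_eq_add_one]; ring
    have hlt := hasSum_lt (i := 0) (fun j => (key j).le) (key 0) hS hU
    calc _ < (2 / π) ^ (2 * n) * x ^ (2 * n) * (tan x / x) := hlt
      _ = _ := by rw [hx]; ring
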